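/- arXiv:2109.06428 — 2 statements merged into one kernel-verified Lean document; each statement's English description precedes it below -/
import Mathlib

section
/- Let α̃, β̃ ∈ ℂ, let i be the imaginary unit, and set κ₀ = (1 − α̃ + β̃)/3 and θ∞ = (−2 + (i√3 − 1)α̃ + (i√3 + 1)β̃)/6, and c' = 3^{1/4}(1−i)/2. Then for all x, y, z ∈ ℂ, setting f = ((1−i)/3^{3/4})(x + y − z), g = −((1+i)/(4·3^{3/4}))((√3 + i)x − (√3 − i)y + 2i·z) and t = c'·z, the identity H_Kek(x, y; z) = 3( c'·H_Ok(f, g; t) − ((1 + i√3)/6)x + ((1 − i√3)/6)y + z³/9 + ((1 + i√3)/6)z·α̃ + ((1 − i√3)/6)z·β̃ ) holds, where H_Kek(x,y;z) = (x³ + y³)/3 + z·xy + α̃·y + β̃·x and H_Ok(f,g;t) = 2fg² − (f² + 2tf + 2κ₀)g + θ∞·f. -/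
open Complex

/-!
Let `ω = (i√3 - 1)/2` and `L ζ = ζ x + ζ² y - z`. Then `x³ + y³ - z³ + 3xyz = L 1 * L ω * L ω²` and
`L 1 + L ω + L ω² = -3z`. The cubic part of the Okamoto Hamiltonian is `f g (2g - f - 2t)`, and the
change of variables makes `f`, `g` and `2g - f - 2t` equal to `2c'/3`, `-c'/3` and `2c'/3` times
`L 1`, `L ω` and `L ω²`, so the cubic parts match because `c'⁴ = -3/4`. In the part linear in `f, g`
the factor `c'` appears only through `2c'² = -(2ω + 1)`, which reduces the comparison to
`ω² + ω + 1 = 0`.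
-/

theorem cubes_sub_three_mul_eq_mul {R : Type*} [CommRing R] {ω : R} (hω : ω ^ 2 + ω + 1 = 0)
    (a b c : R) :
    a ^ 3 + b ^ 3 + c ^ 3 - 3 * a * b * c =
      (a + b + c) * (ω * a + ω ^ 2 * b + c) * (ω ^ 2 * a + ω * b + c) := by
  linear_combination -(a + b + c) *
    ((ω - 1) * (a ^ 2 + b ^ 2) + (ω ^ 2 - ω + 1) * a * b + c * (a + b)) * hω

section Hamiltonians

variable {K : Type*} [Field K]

/-- The Okamoto Hamiltonian for P_IV, with parameters `κ₀` and `θ` (for `θ∞`), over any field. -/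
def okamotoHamiltonian (κ₀ θ f g t : K) : K :=
  2 * f * g ^ 2 - (f ^ 2 + 2 * t * f + 2 * κ₀) * g + θ * f

/-- The Kecker Hamiltonian for P_IV, with parameters `α` and `β` (for `α̃` and `β̃`), over any
field. -/
def keckerHamiltonian (α β x y z : K) : K :=
  (x ^ 3 + y ^ 3) / 3 + z * x * y + α * y + β * x

theorem okamotoHamiltonian_eq_mul_add (κ₀ θ f g t : K) :
    okamotoHamiltonian κ₀ θ f g t = f * g * (2 * g - f - 2 * t) + (θ * f - 2 * κ₀ * g) := by
  unfold okamotoHamiltonian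
  ring

variable {ω c : K}

theorem okamoto_cubic_part_eq (h3 : (3 : K) ≠ 0) (hω : ω ^ 2 + ω + 1 = 0)
    (hc : 2 * c ^ 2 = -(2 * ω + 1)) {x y z f g t : K} (hf : f = 2 * c / 3 * (x + y - z))
    (hg : g = -(c / 3) * (ω * x + ω ^ 2 * y - z)) (ht : t = c * z) :
    3 * c * (f * g * (2 * g - f - 2 * t)) = (x ^ 3 + y ^ 3 - z ^ 3) / 3 + z * x * y := by
  have third_factor : 2 * g - f - 2 * t = 2 * c / 3 * (ω ^ 2 * x + ω * y - z) := by
    rw [hf, hg, ht]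
    field_simp
    linear_combination -(2 * c * (x + y)) * hω
  have c_pow_four : 4 * c ^ 4 = -3 := by
    linear_combination (2 * c ^ 2 - (2 * ω + 1)) * hc + 4 * hω
  have factorization := cubes_sub_three_mul_eq_mul hω x y (-z)
  calc 3 * c * (f * g * (2 * g - f - 2 * t))
      = -(4 * c ^ 4) / 3 ^ 2 *
          ((x + y - z) * (ω * x + ω ^ 2 * y - z) * (ω ^ 2 * x + ω * y - z)) := by
        rw [third_factor, hf, hg]
        field_simp
        ring
    _ = (x ^ 3 + y ^ 3 - z ^ 3) / 3 + z * x * y := by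
        rw [c_pow_four]
        field_simp
        linear_combination -factorization

theorem okamoto_linear_part_eq (h3 : (3 : K) ≠ 0) (hω : ω ^ 2 + ω + 1 = 0)
    (hc : 2 * c ^ 2 = -(2 * ω + 1)) {α β x y z κ₀ θ f g : K} (hκ₀ : κ₀ = (1 - α + β) / 3)
    (hθ : θ = (-1 + ω * α - ω ^ 2 * β) / 3) (hf : f = 2 * c / 3 * (x + y - z))
    (hg : g = -(c / 3) * (ω * x + ω ^ 2 * y - z)) :
    3 * c * (θ * f - 2 * κ₀ * g) =
      α * y + β * x - ω ^ 2 * (x - z * α) + ω * (y + z * β) := by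
  calc 3 * c * (θ * f - 2 * κ₀ * g)
      = 2 * c ^ 2 * (θ * (x + y - z) + κ₀ * (ω * x + ω ^ 2 * y - z)) := by
        rw [hf, hg]
        field_simp
        ring
    _ = α * y + β * x - ω ^ 2 * (x - z * α) + ω * (y + z * β) := by
        rw [hc, hκ₀, hθ]
        field_simp
        linear_combination (x * (1 + (2 * ω - 3) * β) + y * (1 - 2 * ω + (2 * ω - 3) * α) +
          z * ((1 - 2 * ω) * β - α)) * hω

theorem keckerHamiltonian_eq_okamotoHamiltonian (h3 : (3 : K) ≠ 0) (hω : ω ^ 2 + ω + 1 = 0)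
    (hc : 2 * c ^ 2 = -(2 * ω + 1)) (α β x y z : K) :
    keckerHamiltonian α β x y z =
      3 * c * okamotoHamiltonian ((1 - α + β) / 3) ((-1 + ω * α - ω ^ 2 * β) / 3)
          (2 * c / 3 * (x + y - z)) (-(c / 3) * (ω * x + ω ^ 2 * y - z)) (c * z) +
        ω ^ 2 * (x - z * α) - ω * (y + z * β) + z ^ 3 / 3 := by
  rw [okamotoHamiltonian_eq_mul_add, mul_add, okamoto_cubic_part_eq h3 hω hc rfl rfl rfl,
    okamoto_linear_part_eq h3 hω hc rfl rfl rfl rfl, keckerHamiltonian]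
  ring

theorem sub_one_div_two_sq_of_sq_eq_neg_three (h2 : (2 : K) ≠ 0) {d : K} (hd : d ^ 2 = -3) :
    ((d - 1) / 2) ^ 2 = -(d + 1) / 2 := by
  field_simp
  linear_combination hd

theorem okamoto_second_coordinate_eq (h2 : (2 : K) ≠ 0) {i r : K} (hi : i ^ 2 = -1) (hr : r ^ 4 = 3)
    (hr0 : r ≠ 0) (x y z : K) :
    -((1 + i) / (4 * r ^ 3)) * ((r ^ 2 + i) * x - (r ^ 2 - i) * y + 2 * i * z) =
      -(r * (1 - i) / 2 / 3) * ((i * r ^ 2 - 1) / 2 * x + -(i * r ^ 2 + 1) / 2 * y - z) := by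
  have h4 : (4 : K) = 2 ^ 2 := by norm_num
  rw [← hr, h4]
  field_simp
  linear_combination -((r ^ 2 + 1) * x - (r ^ 2 - 1) * y + 2 * z) * hi

theorem kecker_equals_okamoto_hamiltonian_PIV_general (h2 : (2 : K) ≠ 0) (h3 : (3 : K) ≠ 0)
    {i r : K} (hi : i ^ 2 = -1) (hr : r ^ 4 = 3) (α β x y z : K) :
    keckerHamiltonian α β x y z =
      3 * (r * (1 - i) / 2 *
          okamotoHamiltonian ((1 - α + β) / 3)
            ((-2 + (i * r ^ 2 - 1) * α + (i * r ^ 2 + 1) * β) / 6)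
            ((1 - i) / r ^ 3 * (x + y - z))
            (-((1 + i) / (4 * r ^ 3)) * ((r ^ 2 + i) * x - (r ^ 2 - i) * y + 2 * i * z))
            (r * (1 - i) / 2 * z)
        - (1 + i * r ^ 2) / 6 * x + (1 - i * r ^ 2) / 6 * y
        + z ^ 3 / 9 + (1 + i * r ^ 2) / 6 * z * α + (1 - i * r ^ 2) / 6 * z * β) := by
  have h6 : (6 : K) = 2 * 3 := by norm_num
  have h9 : (9 : K) = 3 ^ 2 := by norm_num
  have hr0 : r ≠ 0 := by
    rintro rfl
    exact h3 (by simpa using hr.symm)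
  have hω2 : ((i * r ^ 2 - 1) / 2) ^ 2 = -(i * r ^ 2 + 1) / 2 :=
    sub_one_div_two_sq_of_sq_eq_neg_three h2 (by linear_combination r ^ 4 * hi - hr)
  have hω : ((i * r ^ 2 - 1) / 2) ^ 2 + (i * r ^ 2 - 1) / 2 + 1 = 0 := by
    rw [hω2]
    field_simp
    ring
  have hc : 2 * (r * (1 - i) / 2) ^ 2 = -(2 * ((i * r ^ 2 - 1) / 2) + 1) := by
    field_simp
    linear_combination r ^ 2 * hi
  have hθ : (-2 + (i * r ^ 2 - 1) * α + (i * r ^ 2 + 1) * β) / 6 =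
      (-1 + (i * r ^ 2 - 1) / 2 * α - -(i * r ^ 2 + 1) / 2 * β) / 3 := by
    rw [h6]
    field_simp
    ring
  have hf : (1 - i) / r ^ 3 * (x + y - z) = 2 * (r * (1 - i) / 2) / 3 * (x + y - z) := by
    rw [← hr]
    field_simp
  rw [keckerHamiltonian_eq_okamotoHamiltonian h3 hω hc, hω2, hθ, hf,
    okamoto_second_coordinate_eq h2 hi hr hr0, h6, h9]
  field_simp
  ring

end Hamiltonians

theorem ofReal_rpow_natCast_div {a : ℝ} (ha : 0 ≤ a) (n : ℕ) (k : ℝ) :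
    ((a ^ (n / k) : ℝ) : ℂ) = ((a ^ (1 / k) : ℝ) : ℂ) ^ n := by
  rw [← ofReal_pow, ← Real.rpow_mul_natCast ha, one_div_mul_eq_div]

/-- under the substitutions `f = ((1−i)/3^(3/4))(x+y−z)`,
`g = −((1+i)/(4·3^(3/4)))((√3+i)x − (√3−i)y + 2iz)`, `t = c'·z`, and with parameters
`κ₀ = (1 − α̃ + β̃)/3`, `θ∞ = (−2 + (i√3 − 1)α̃ + (i√3 + 1)β̃)/6`, the Kecker
Hamiltonian for P_IV is related to the Okamoto Hamiltonian as stated in Theorem 2.3. -/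
theorem kecker_equals_okamoto_hamiltonian_PIV
    (αk βk κ₀ θoo c' : ℂ)
    (hκ₀ : κ₀ = (1 - αk + βk) / 3)
    (hθoo : θoo = (-2 + (I * (Real.sqrt 3 : ℂ) - 1) * αk
      + (I * (Real.sqrt 3 : ℂ) + 1) * βk) / 6)
    (hc' : c' = Complex.ofReal ((3 : ℝ) ^ ((1 : ℝ) / 4)) * (1 - I) / 2)
    (x y z f g t : ℂ)
    (hf : f = ((1 - I) / Complex.ofReal ((3 : ℝ) ^ ((3 : ℝ) / 4))) * (x + y - z))
    (hg : g = -((1 + I) / (4 * Complex.ofReal ((3 : ℝ) ^ ((3 : ℝ) / 4)))) *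
      (((Real.sqrt 3 : ℂ) + I) * x - ((Real.sqrt 3 : ℂ) - I) * y + 2 * I * z))
    (ht : t = c' * z) :
    (x ^ 3 + y ^ 3) / 3 + z * x * y + αk * y + βk * x
      = 3 * (c' * (2 * f * g ^ 2 - (f ^ 2 + 2 * t * f + 2 * κ₀) * g + θoo * f)
          - ((1 + I * (Real.sqrt 3 : ℂ)) / 6) * x + ((1 - I * (Real.sqrt 3 : ℂ)) / 6) * y
          + z ^ 3 / 9 + ((1 + I * (Real.sqrt 3 : ℂ)) / 6) * z * αk
          + ((1 - I * (Real.sqrt 3 : ℂ)) / 6) * z * βk) := by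
  have hr : ((3 ^ ((1 : ℝ) / 4) : ℝ) : ℂ) ^ 4 = 3 := by
    simpa using (ofReal_rpow_natCast_div zero_le_three 4 4).symm
  have hsqrt : (Real.sqrt 3 : ℂ) = ((3 ^ ((1 : ℝ) / 4) : ℝ) : ℂ) ^ 2 := by
    rw [← ofReal_rpow_natCast_div zero_le_three, Real.sqrt_eq_rpow]
    norm_num
  have hcube : ((3 ^ ((3 : ℝ) / 4) : ℝ) : ℂ) = ((3 ^ ((1 : ℝ) / 4) : ℝ) : ℂ) ^ 3 :=
    mod_cast ofReal_rpow_natCast_div zero_le_three 3 4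
  subst hκ₀ hθoo hc' hf hg ht
  rw [hsqrt, hcube]
  exact kecker_equals_okamoto_hamiltonian_PIV_general two_ne_zero three_ne_zero I_sq hr αk βk x y z
end

section
/- Let a₀, a₁, a₂, a₃ ∈ ℂ with a₀ + a₁ + a₂ + a₃ = 1. Let U ⊆ ℂ ∖ {0} be a nonempty open connected set and let q, p : U → ℂ be differentiable functions with q(t) ∉ {0, 1} for all t ∈ U that solve the Kajiwara–Noumi–Yamada Hamiltonian system for P_V: q'(t) = (1/t)(q(q−1)(2p+t) − a₁(q−1) − a₃q) and p'(t) = (1/t)(p(p+t)(1−2q) + (a₁+a₃)p − a₂t) on U. Then the function w(t) = 1 − 1/q(t) is twice differentiable and satisfies the fifth Painlevé equation w'' = (1/(2w) + 1/(w−1))(w')² − w'/t + ((w−1)²/t²)(α·w + β/w) + γ·w/t + δ·w(w+1)/(w−1) on U with parameters α = a₁²/2, β = −a₃²/2, γ = a₀ − a₂, δ = −1/2. -/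
open Complex

/-!
In the variables `w = 1 - 1 / q` and `v = 2 * p + t` the Hamiltonian system becomes
`t w' = w v + (w - 1) (a₁ w + a₃)` and
`t v' = (w + 1) / (2 (w - 1)) * (v² - t²) + (a₁ + a₃) v + (a₀ - a₂) t`;
the first equation is linear in `v`. Differentiating it and inserting the second gives an equation
for `w` alone after eliminating `v`. The shift of `2 * p` by `t` completes the square,
`4 p (p + t) = v² - t²`, which is where `δ = -1/2` comes from, and the term `t` in `t v'` combines
with `a₀ + a₁ + a₂ + a₃ = 1` to give `γ = a₀ - a₂`.
-/

section PainleveV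

variable {𝕜 : Type*} [NontriviallyNormedField 𝕜]

/-- `w` solves the fifth Painlevé equation with parameters `α, β, γ, δ` at the point `t`. The
differentiability of `w` and `deriv w` is part of the definition because `deriv` is `0` where it
fails; the equation is meaningful only for `t ≠ 0` and `w t ∉ {0, 1}`. -/
def IsPainleveVSolutionAt (α β γ δ : 𝕜) (w : 𝕜 → 𝕜) (t : 𝕜) : Prop :=
  DifferentiableAt 𝕜 w t ∧ DifferentiableAt 𝕜 (deriv w) t ∧
    deriv (deriv w) t =
      (1 / (2 * w t) + 1 / (w t - 1)) * (deriv w t) ^ 2 - deriv w t / t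
        + ((w t - 1) ^ 2 / t ^ 2) * (α * w t + β / w t)
        + γ * w t / t + δ * w t * (w t + 1) / (w t - 1)

/-- `(q, p)` solves the Kajiwara–Noumi–Yamada Hamiltonian system for P_V on `U`. The parameter
`a₀ = 1 - a₁ - a₂ - a₃` does not enter the equations. -/
structure IsKNYSolutionOn (a₁ a₂ a₃ : 𝕜) (q p : 𝕜 → 𝕜) (U : Set 𝕜) : Prop where
  hasDerivAt_position : ∀ t ∈ U, HasDerivAt q
    ((1 / t) * (q t * (q t - 1) * (2 * p t + t) - a₁ * (q t - 1) - a₃ * q t)) t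
  hasDerivAt_momentum : ∀ t ∈ U, HasDerivAt p
    ((1 / t) * (p t * (p t + t) * (1 - 2 * q t) + (a₁ + a₃) * p t - a₂ * t)) t

/-- `(w, v)` solves on `U` a first-order form of P_V with parameters `α = a² / 2`,
`β = -b² / 2`, `γ`, `δ`. The auxiliary function `v` enters the equation for `w`
linearly, so that it can be eliminated. -/
structure IsPainleveVSystemSolutionOn (a b γ δ : 𝕜) (w v : 𝕜 → 𝕜) (U : Set 𝕜) : Prop where
  hasDerivAt_fst : ∀ t ∈ U, HasDerivAt w ((w t * v t + (w t - 1) * (a * w t + b)) / t) t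
  hasDerivAt_snd : ∀ t ∈ U, HasDerivAt v
    (((w t + 1) / (2 * (w t - 1)) * (v t ^ 2 + 2 * δ * t ^ 2) + (a + b) * v t + γ * t) / t) t

namespace IsPainleveVSystemSolutionOn

variable {a b γ δ t : 𝕜} {w v : 𝕜 → 𝕜} {U : Set 𝕜}

theorem hasDerivAt_deriv_fst (h : IsPainleveVSystemSolutionOn a b γ δ w v U) (hU : IsOpen U)
    (ht : t ∈ U) (ht0 : t ≠ 0) :
    HasDerivAt (deriv w)
      ((deriv w t * (v t + 2 * a * w t + b - a) + w t * deriv v t - deriv w t) / t) t := by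
  have hderiv : deriv w =ᶠ[nhds t] fun s ↦ (w s * v s + (w s - 1) * (a * w s + b)) / s := by
    filter_upwards [hU.mem_nhds ht] with s hs using (h.hasDerivAt_fst s hs).deriv
  have hw : HasDerivAt w (deriv w t) t := (h.hasDerivAt_fst t ht).differentiableAt.hasDerivAt
  have hv : HasDerivAt v (deriv v t) t := (h.hasDerivAt_snd t ht).differentiableAt.hasDerivAt
  have hnum : HasDerivAt (fun s ↦ w s * v s + (w s - 1) * (a * w s + b))
      (deriv w t * (v t + 2 * a * w t + b - a) + w t * deriv v t) t :=
    ((hw.fun_mul hv).fun_add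
      ((hw.sub_const 1).fun_mul ((hw.const_mul a).add_const b))).congr_deriv (by ring)
  refine ((hnum.fun_div (hasDerivAt_id' t) ht0).congr_of_eventuallyEq hderiv).congr_deriv ?_
  rw [hderiv.eq_of_nhds]
  field_simp

theorem isPainleveVSolutionAt [NeZero (2 : 𝕜)] (h : IsPainleveVSystemSolutionOn a b γ δ w v U)
    (hU : IsOpen U) (ht : t ∈ U) (ht0 : t ≠ 0) (hw0 : w t ≠ 0) (hw1 : w t ≠ 1) :
    IsPainleveVSolutionAt (a ^ 2 / 2) (-b ^ 2 / 2) γ δ w t := by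
  have hw'' := h.hasDerivAt_deriv_fst hU ht ht0
  refine ⟨(h.hasDerivAt_fst t ht).differentiableAt, hw''.differentiableAt, ?_⟩
  -- Substituting the system turns both sides into quadratic polynomials in `v t` whose coefficients
  -- agree as rational functions of `w t` and `t`.
  rw [hw''.deriv, (h.hasDerivAt_fst t ht).deriv, (h.hasDerivAt_snd t ht).deriv]
  field_simp
  ring

end IsPainleveVSystemSolutionOn

theorem IsKNYSolutionOn.isPainleveVSystemSolutionOn [NeZero (2 : 𝕜)] {a₀ a₁ a₂ a₃ : 𝕜}
    {q p : 𝕜 → 𝕜} {U : Set 𝕜} (h : IsKNYSolutionOn a₁ a₂ a₃ q p U)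
    (hsum : a₀ + a₁ + a₂ + a₃ = 1) (hU0 : ∀ t ∈ U, t ≠ 0) (hq0 : ∀ t ∈ U, q t ≠ 0) :
    IsPainleveVSystemSolutionOn a₁ a₃ (a₀ - a₂) (-(1 / 2))
      (fun t ↦ 1 - 1 / q t) (fun t ↦ 2 * p t + t) U where
  hasDerivAt_fst t ht := by
    have hqt := hq0 t ht
    have hw := ((hasDerivAt_const t (1 : 𝕜)).fun_div (h.hasDerivAt_position t ht) hqt).const_sub 1
    refine hw.congr_deriv ?_
    field_simp
    ring
  hasDerivAt_snd t ht := by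
    have ht0 := hU0 t ht
    have hqt := hq0 t ht
    have hv := ((h.hasDerivAt_momentum t ht).const_mul 2).fun_add (hasDerivAt_id' t)
    have hratio : (1 - 1 / q t + 1) / (2 * (1 - 1 / q t - 1)) = (1 - 2 * q t) / 2 := by
      field_simp
      ring
    have hsquare : (2 * p t + t) ^ 2 + 2 * -(1 / 2) * t ^ 2 = 4 * (p t * (p t + t)) := by
      field_simp
      ring
    refine hv.congr_deriv ?_
    rw [hratio, hsquare]
    field_simp
    linear_combination -2 * t * hsum

theorem kny_hamiltonian_system_gives_PV_general [NeZero (2 : 𝕜)] {a₀ a₁ a₂ a₃ : 𝕜}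
    (hsum : a₀ + a₁ + a₂ + a₃ = 1) {U : Set 𝕜} (hU : IsOpen U) (hU0 : ∀ t ∈ U, t ≠ 0)
    {q p : 𝕜 → 𝕜} (hq01 : ∀ t ∈ U, q t ≠ 0 ∧ q t ≠ 1) (h : IsKNYSolutionOn a₁ a₂ a₃ q p U) :
    ∀ t ∈ U, IsPainleveVSolutionAt (a₁ ^ 2 / 2) (-a₃ ^ 2 / 2) (a₀ - a₂) (-(1 / 2))
      (fun t ↦ 1 - 1 / q t) t := by
  intro t ht
  obtain ⟨hq0, hq1⟩ := hq01 t ht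
  have hw0 : 1 - 1 / q t ≠ 0 := by rwa [sub_ne_zero, ne_comm, one_div, inv_ne_one]
  have hw1 : 1 - 1 / q t ≠ 1 := by simpa using hq0
  exact (h.isPainleveVSystemSolutionOn hsum hU0 fun s hs ↦ (hq01 s hs).1).isPainleveVSolutionAt
    hU ht (hU0 t ht) hw0 hw1

end PainleveV

/-- a solution `(q, p)` of the Kajiwara–Noumi–Yamada Hamiltonian system
for P_V with normalized root variables `a₀ + a₁ + a₂ + a₃ = 1` (with `q` omitting the
values 0 and 1, on a domain avoiding 0) yields, via `w = 1 − 1/q`, a solution of the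
fifth Painlevé equation with parameters `α = a₁²/2`, `β = −a₃²/2`, `γ = a₀ − a₂`,
`δ = −1/2`. -/
theorem kny_hamiltonian_system_gives_PV
    (a₀ a₁ a₂ a₃ : ℂ) (hsum : a₀ + a₁ + a₂ + a₃ = 1)
    (U : Set ℂ)
    (hUo : IsOpen U) (hUne : U.Nonempty) (hUc : IsPreconnected U)
    (hU0 : ∀ t ∈ U, t ≠ 0)
    (q p : ℂ → ℂ)
    (hq01 : ∀ t ∈ U, q t ≠ 0 ∧ q t ≠ 1)
    (hq : ∀ t ∈ U, HasDerivAt q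
      ((1 / t) * (q t * (q t - 1) * (2 * p t + t) - a₁ * (q t - 1) - a₃ * q t)) t)
    (hp : ∀ t ∈ U, HasDerivAt p
      ((1 / t) * (p t * (p t + t) * (1 - 2 * q t) + (a₁ + a₃) * p t - a₂ * t)) t)
    (w : ℂ → ℂ) (hw_def : ∀ t, w t = 1 - 1 / q t)
    (α β γ δ : ℂ)
    (hα : α = a₁ ^ 2 / 2) (hβ : β = -a₃ ^ 2 / 2)
    (hγ : γ = a₀ - a₂) (hδ : δ = -(1 / 2)) :
    ∀ t ∈ U, DifferentiableAt ℂ w t ∧ DifferentiableAt ℂ (deriv w) t ∧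
      deriv (deriv w) t =
        (1 / (2 * w t) + 1 / (w t - 1)) * (deriv w t) ^ 2 - deriv w t / t
          + ((w t - 1) ^ 2 / t ^ 2) * (α * w t + β / w t)
          + γ * w t / t + δ * w t * (w t + 1) / (w t - 1) := by
  obtain rfl : w = fun t ↦ 1 - 1 / q t := funext hw_def
  subst hα hβ hγ hδ
  exact kny_hamiltonian_system_gives_PV_general hsum hUo hU0 hq01 ⟨hq, hp⟩
end
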